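/- arXiv:2407.21129 — 8 statements merged into one kernel-verified Lean document; each statement's English description precedes it below -/
import Mathlib

section
/- Let C and D be categories, let F, G : C ⥤ D be functors, and let t : F ⟶ G be a taut natural transformation. If G is a taut functor, then F is a taut functor. -/
/-! Tautness of `t` and `G` is used to compare two factorizations of a single square. Given an
inverse image square with monic leg `g : Y ⟶ Z`, its opposite side `fst : P ⟶ X` is monic too, so the
naturality square of `t` at `fst` is a pullback; pasted with the `G`-image of the given square, it is
a pullback from `F.obj P` over `G.map g`. By naturality the same outer rectangle is the `F`-image of
the given square pasted with the naturality square of `t` at `g`, itself a pullback. Cancellation for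
pullbacks (`IsPullback.of_right`) then gives the claim. -/

open CategoryTheory CategoryTheory.Limits

universe u v

/-- A functor is *taut* if it preserves inverse image diagrams, i.e. pullback squares
whose leg `g` (in the cospan) is a monomorphism. -/
def CategoryTheory.Functor.IsTaut {C : Type*} [Category C] {D : Type*} [Category D]
    (F : C ⥤ D) : Prop :=
  ∀ {P X Y Z : C} (fst : P ⟶ X) (snd : P ⟶ Y) (f : X ⟶ Z) (g : Y ⟶ Z) [Mono g],
    IsPullback fst snd f g → IsPullback (F.map fst) (F.map snd) (F.map f) (F.map g)

/-- A natural transformation is *taut* if its naturality squares at monomorphisms are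
pullbacks. -/
def CategoryTheory.NatTrans.IsTaut {C : Type*} [Category C] {D : Type*} [Category D]
    {F G : C ⥤ D} (t : F ⟶ G) : Prop :=
  ∀ {A B : C} (m : A ⟶ B) [Mono m],
    IsPullback (F.map m) (t.app A) (t.app B) (G.map m)

/-- If `t : F ⟶ G` is a taut natural transformation and `G` is a taut functor,
then `F` is a taut functor. -/
theorem taut_of_tautTrans_of_taut {C : Type*} [Category C] {D : Type*} [Category D]
    {F G : C ⥤ D} (t : F ⟶ G) (ht : NatTrans.IsTaut t) (hG : G.IsTaut) : F.IsTaut := by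
  intro P X Y Z fst snd f g _ h
  have : Mono fst := h.mono_fst_of_mono
  have outer := (ht fst).flip.paste_horiz (hG fst snd f g h).flip
  rw [← t.naturality snd, ← t.naturality f] at outer
  have comm : F.map snd ≫ F.map g = F.map fst ≫ F.map f := by
    rw [← F.map_comp, ← F.map_comp, h.w]
  exact (outer.of_right comm (ht g).flip).flip
end

section
/- Let I be a small nonempty connected category, C a category, and Φ : I ⥤ (C ⥤ Type u) a diagram such that Φ.obj i is a taut functor for every object i and Φ.map α is a taut natural transformation for every morphism α of I. Then the limit functor limit Φ is taut, and for every object I₀ of I the limit projection limit.π Φ I₀ : limit Φ ⟶ Φ.obj I₀ is a taut natural transformation. -/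
/-!
Tautness of the projections is the main point. A taut functor preserves monomorphisms, so
for a monomorphism `m : A ⟶ B` and a map `h : W ⟶ (limit Φ) B`, each component
`h ≫ π i` has at most one lift along `Φ i m`. Existence of a lift is a property of `i`
that is invariant along the arrows of `I`: it passes forward by composing with the
transition map and backward because the transition squares are pullbacks. As `I` is
connected, a lift at one object yields lifts at all objects; by uniqueness they form a
cone, hence assemble to a lift of `h` along `(limit Φ) m`.

Tautness of `limit Φ` is then formal: an inverse image square of `limit Φ` is compared by
a taut projection `π i` with its image under `Φ i`, and the pasting and cancellation
laws for pullbacks apply.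
-/

open CategoryTheory CategoryTheory.Limits

universe u v w

theorem CategoryTheory.Functor.IsTaut.mono_map {C : Type*} [Category C] {D : Type*}
    [Category D] {F : C ⥤ D} (hF : F.IsTaut) {A B : C} (m : A ⟶ B) [Mono m] :
    Mono (F.map m) := by
  -- The kernel pair of a monomorphism is trivial, and this is an inverse image square.
  have h := hF (𝟙 A) (𝟙 A) m m (IsKernelPair.id_of_mono m)
  refine ⟨fun a b hab => ?_⟩
  rw [F.map_id] at h
  exact ((h.lift_fst a b hab).symm).trans (h.lift_snd a b hab)

/-- A lift along `m` of one component of `h : W ⟶ (limit Φ) B` propagates along the zigzags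
of `I` to a lift of every component. -/
theorem exists_lift_of_connected {I : Type u} [SmallCategory I] [IsConnected I]
    {C : Type v} [Category.{w} C] (Φ : I ⥤ (C ⥤ Type u))
    (hmap : ∀ {i j : I} (α : i ⟶ j), NatTrans.IsTaut (Φ.map α)) (I₀ : I)
    {A B : C} (m : A ⟶ B) [Mono m] {W : Type u} (h : W ⟶ (limit Φ).obj B)
    (k : W ⟶ (Φ.obj I₀).obj A)
    (w : h ≫ (limit.π Φ I₀).app B = k ≫ (Φ.obj I₀).map m) (i : I) :
    ∃ l : W ⟶ (Φ.obj i).obj A, l ≫ (Φ.obj i).map m = h ≫ (limit.π Φ i).app B := by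
  have hw : ∀ {i j : I} (α : i ⟶ j), (limit.π Φ i).app B ≫ (Φ.map α).app B =
      (limit.π Φ j).app B := fun α => by rw [← NatTrans.comp_app, limit.w]
  refine induct_on_objects
    {i : I | ∃ l : W ⟶ (Φ.obj i).obj A, l ≫ (Φ.obj i).map m = h ≫ (limit.π Φ i).app B}
    (j₀ := I₀) ⟨k, w.symm⟩ ?_ i
  intro i j α
  constructor
  · rintro ⟨l, hl⟩
    refine ⟨l ≫ (Φ.map α).app A, ?_⟩
    rw [Category.assoc, ← NatTrans.naturality, ← Category.assoc, hl, Category.assoc, hw]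
  · rintro ⟨l, hl⟩
    have e : (h ≫ (limit.π Φ i).app B) ≫ (Φ.map α).app B = l ≫ (Φ.obj j).map m := by
      rw [hl, Category.assoc, hw]
    exact ⟨(hmap α m).lift _ _ e, (hmap α m).lift_fst _ _ e⟩

theorem limit_π_isTaut {I : Type u} [SmallCategory I] [IsConnected I]
    {C : Type v} [Category.{w} C] (Φ : I ⥤ (C ⥤ Type u))
    (hobj : ∀ i : I, (Φ.obj i).IsTaut)
    (hmap : ∀ {i j : I} (α : i ⟶ j), NatTrans.IsTaut (Φ.map α)) (I₀ : I) :
    NatTrans.IsTaut (limit.π Φ I₀) := by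
  intro A B m _
  have hmono : ∀ i, Mono ((Φ.obj i).map m) := fun i => Functor.IsTaut.mono_map (hobj i) m
  let lim (X : C) := isLimitOfPreserves ((evaluation C (Type u)).obj X) (limit.isLimit Φ)
  have ext : ∀ {X : C} {W : Type u} (a b : W ⟶ (limit Φ).obj X),
      (∀ i, a ≫ (limit.π Φ i).app X = b ≫ (limit.π Φ i).app X) → a = b :=
    fun {X W} a b hab => (lim X).hom_ext hab
  -- Compatibility of a lift with `k` is not required here: it is automatic, `Φ I₀ m` being monic.
  have key : ∀ {W : Type u} (h : W ⟶ (limit Φ).obj B) (k : W ⟶ (Φ.obj I₀).obj A),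
      h ≫ (limit.π Φ I₀).app B = k ≫ (Φ.obj I₀).map m →
      ∃ l : W ⟶ (limit Φ).obj A, l ≫ (limit Φ).map m = h := by
    intro W h k w
    choose l hl using exists_lift_of_connected Φ hmap I₀ m h k w
    let c : Cone (Φ ⋙ (evaluation C (Type u)).obj A) :=
      { pt := W
        π :=
          { app := l
            naturality := fun i j α => by
              have := hmono j
              refine (Category.id_comp _).trans ?_
              rw [← cancel_mono ((Φ.obj j).map m)]
              change l j ≫ _ = (l i ≫ (Φ.map α).app A) ≫ _
              rw [hl, Category.assoc, ← NatTrans.naturality, ← Category.assoc, hl,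
                Category.assoc, ← NatTrans.comp_app, limit.w] } }
    refine ⟨(lim A).lift c, ext _ _ fun i => ?_⟩
    have hfac : (lim A).lift c ≫ (limit.π Φ i).app A = l i := (lim A).fac c i
    rw [Category.assoc, NatTrans.naturality, ← Category.assoc, hfac, hl]
  have hL : Mono ((limit Φ).map m) := by
    refine ⟨fun a b hab => ext _ _ fun i => ?_⟩
    have := hmono i
    rw [← cancel_mono ((Φ.obj i).map m), Category.assoc, Category.assoc,
      ← NatTrans.naturality, ← Category.assoc, hab, Category.assoc]
  refine ⟨⟨NatTrans.naturality _ _⟩, ⟨PullbackCone.IsLimit.mk _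
    (fun s => (key s.fst s.snd s.condition).choose)
    (fun s => (key s.fst s.snd s.condition).choose_spec) (fun s => ?_) ?_⟩⟩
  · have := hmono I₀
    rw [← cancel_mono ((Φ.obj I₀).map m), Category.assoc, ← NatTrans.naturality,
      ← Category.assoc, (key s.fst s.snd s.condition).choose_spec, s.condition]
  · intro s l h₁ _
    rw [← cancel_mono ((limit Φ).map m), h₁, (key s.fst s.snd s.condition).choose_spec]

/-- For a nonempty connected limit of taut functors (with taut transition maps), the
limit is taut and all limit projections are taut. -/
theorem limit_isTaut_of_connected {I : Type u} [SmallCategory I] [IsConnected I]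
    {C : Type v} [Category.{w} C] (Φ : I ⥤ (C ⥤ Type u))
    (hobj : ∀ i : I, (Φ.obj i).IsTaut)
    (hmap : ∀ {i j : I} (α : i ⟶ j), NatTrans.IsTaut (Φ.map α)) :
    (limit Φ).IsTaut ∧ ∀ I₀ : I, NatTrans.IsTaut (limit.π Φ I₀) := by
  have hπ : ∀ I₀ : I, NatTrans.IsTaut (limit.π Φ I₀) :=
    fun I₀ A B m _ => limit_π_isTaut Φ hobj hmap I₀ m
  refine ⟨?_, hπ⟩
  intro P X Y Z fst snd f g _ h
  let I₀ : I := Classical.arbitrary I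
  have : Mono fst := h.mono_fst_of_mono
  have outer := (hπ I₀ fst).paste_vert (hobj I₀ fst snd f g h)
  rw [← NatTrans.naturality, ← NatTrans.naturality] at outer
  exact outer.of_bot (by rw [← Functor.map_comp, ← Functor.map_comp, h.w]) (hπ I₀ g)
end

section
/- Let I be a small category. The colimit functor colim : (I ⥤ Type u) ⥤ Type u is taut (equivalently, I-colimits commute with inverse images in the category of sets) if and only if I is confluent. -/
/-!
If `I` is confluent, two elements of a diagram of sets become equal in the colimit exactly when they
become equal at some common later stage (`colimit_ι_eq_iff`). Given an inverse image square, an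
element of `colim X` and one of `colim Y` with the same image in `colim Z` can thus be moved to a
single stage where they already agree, and there the pullback is computed in sets. The induced map
into the pullback of the colimits is also injective, because `colim` preserves monomorphisms (the
same criterion) and pullbacks preserve monomorphisms.

Conversely, given `α₁ : X ⟶ I₁` and `α₂ : X ⟶ I₂`, pull back along `α₂ : Hom(I₂, -) ⟶ Hom(X, -)` the
subfunctor of `Hom(X, -)` of morphisms that factor through `α₁`. As `α₁` and `α₂` both become equal
to `𝟙 X` in the colimit of `Hom(X, -)`, tautness makes the colimit of the pullback nonempty, so the
pullback is nonempty at some stage `J`; an element of it is a completion of the span.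
-/

open CategoryTheory CategoryTheory.Limits

universe u

/-- A category is *confluent* if every pair of morphisms with common domain can be
completed to a commutative square. -/
def CategoryTheory.Confluent (I : Type*) [Category I] : Prop :=
  ∀ {X I₁ I₂ : I} (α₁ : X ⟶ I₁) (α₂ : X ⟶ I₂),
    ∃ (J : I) (β₁ : I₁ ⟶ J) (β₂ : I₂ ⟶ J), α₁ ≫ β₁ = α₂ ≫ β₂

/-- Becoming equal at a later stage is a transitive relation because `I` is confluent, so it is the
whole equivalence relation that defines the colimit. -/
theorem colimit_ι_eq_iff {I : Type u} [SmallCategory I] (hI : Confluent I) (F : I ⥤ Type u)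
    {i j : I} (x : F.obj i) (y : F.obj j) :
    colimit.ι F i x = colimit.ι F j y ↔
      ∃ (k : I) (a : i ⟶ k) (b : j ⟶ k), F.map a x = F.map b y := by
  constructor
  · intro h
    have key : ∀ p q : Σ i, F.obj i, Relation.EqvGen F.ColimitTypeRel p q →
        ∃ (k : I) (a : p.1 ⟶ k) (b : q.1 ⟶ k), F.map a p.2 = F.map b q.2 := by
      intro p q hpq
      induction hpq with
      | rel p q h =>
        obtain ⟨f, hf⟩ := h
        exact ⟨q.1, f, 𝟙 _, by simp [hf]⟩
      | refl p => exact ⟨p.1, 𝟙 _, 𝟙 _, rfl⟩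
      | symm p q _ ih =>
        obtain ⟨k, a, b, h⟩ := ih
        exact ⟨k, b, a, h.symm⟩
      | trans p q r _ _ ih₁ ih₂ =>
        obtain ⟨k, a, b, h⟩ := ih₁
        obtain ⟨l, c, d, h'⟩ := ih₂
        obtain ⟨m, s, t, hst⟩ := hI b c
        refine ⟨m, a ≫ s, d ≫ t, ?_⟩
        rw [Functor.map_comp_apply, h, ← Functor.map_comp_apply, hst, Functor.map_comp_apply, h',
          ← Functor.map_comp_apply]
    exact key ⟨i, x⟩ ⟨j, y⟩ (Types.colimit_eq h)
  · rintro ⟨k, a, b, h⟩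
    exact Types.colimit_sound' a b h

theorem colim_map_injective {I : Type u} [SmallCategory I] (hI : Confluent I) {Y Z : I ⥤ Type u}
    (g : Y ⟶ Z) [Mono g] : Function.Injective (colim.map g) := by
  intro s t hst
  obtain ⟨i, x, rfl⟩ := Types.jointly_surjective' s
  obtain ⟨j, y, rfl⟩ := Types.jointly_surjective' t
  simp only [colim_map, colimit.ι_map_apply] at hst
  obtain ⟨k, a, b, h⟩ := (colimit_ι_eq_iff hI Z _ _).1 hst
  rw [← NatTrans.naturality_apply, ← NatTrans.naturality_apply] at h
  exact Types.colimit_sound' a b ((mono_iff_injective (g.app k)).1 inferInstance h)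

theorem isTaut_colim_of_confluent {I : Type u} [SmallCategory I] (hI : Confluent I) :
    (colim : (I ⥤ Type u) ⥤ Type u).IsTaut := by
  intro P X Y Z fst snd f g _ h
  rw [Types.isPullback_iff]
  refine ⟨by rw [← Functor.map_comp, h.w, Functor.map_comp], ?_, ?_⟩
  · rintro s t ⟨hst, -⟩
    have : Mono fst := (MorphismProperty.monomorphisms _).of_isPullback h.flip ‹Mono g›
    exact colim_map_injective hI fst hst
  · intro s t hst
    obtain ⟨i, x, rfl⟩ := Types.jointly_surjective' s
    obtain ⟨j, y, rfl⟩ := Types.jointly_surjective' t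
    simp only [colim_map, colimit.ι_map_apply] at hst
    obtain ⟨k, a, b, e⟩ := (colimit_ι_eq_iff hI Z _ _).1 hst
    rw [← NatTrans.naturality_apply, ← NatTrans.naturality_apply] at e
    obtain ⟨p, hp₁, hp₂⟩ := Types.exists_of_isPullback
      (h.map ((evaluation I (Type u)).obj k)) (X.map a x) (Y.map b y) e
    refine ⟨colimit.ι P k p, ?_, ?_⟩
    · simp only [colim_map, colimit.ι_map_apply]
      exact (congrArg (colimit.ι X k) hp₁).trans (colimit.w_apply X a x)
    · simp only [colim_map, colimit.ι_map_apply]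
      exact (congrArg (colimit.ι Y k) hp₂).trans (colimit.w_apply Y b y)

theorem confluent_of_isTaut_colim {I : Type u} [SmallCategory I]
    (hT : (colim : (I ⥤ Type u) ⥤ Type u).IsTaut) : Confluent I := by
  intro X I₁ I₂ α₁ α₂
  -- The morphisms out of `X` that factor through `α₁`.
  let S : Subfunctor (coyoneda.obj (Opposite.op X)) := Subfunctor.range (coyoneda.map α₁.op)
  let f : coyoneda.obj (Opposite.op I₂) ⟶ coyoneda.obj (Opposite.op X) := coyoneda.map α₂.op
  have h := hT _ _ f S.ι (IsPullback.of_hasPullback f S.ι)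
  obtain ⟨p, -, -⟩ := Types.exists_of_isPullback h
    (colimit.ι (coyoneda.obj (Opposite.op I₂)) I₂ (𝟙 I₂))
    (colimit.ι S.toFunctor I₁ ⟨α₁, 𝟙 I₁, Category.comp_id α₁⟩) (by
      simp only [colim_map, colimit.ι_map_apply]
      trans colimit.ι (coyoneda.obj (Opposite.op X)) X (𝟙 X)
      · exact (Types.colimit_sound α₂ (show 𝟙 X ≫ α₂ = α₂ ≫ 𝟙 I₂ by simp)).symm
      · refine Eq.trans ?_ (colimit.ι_map_apply S.ι I₁ _).symm
        exact Types.colimit_sound (F := coyoneda.obj (Opposite.op X)) (x := 𝟙 X) (x' := α₁) α₁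
          (Category.id_comp α₁))
  obtain ⟨J, q, -⟩ := Types.jointly_surjective' p
  obtain ⟨β₁, hβ₁⟩ := ((pullback.snd f S.ι).app J q).2
  refine ⟨J, β₁, (pullback.fst f S.ι).app J q, ?_⟩
  have hw := ConcreteCategory.congr_hom
    (NatTrans.congr_app (pullback.condition (f := f) (g := S.ι)) J) q
  exact hβ₁.trans hw.symm

/-- `I`-colimits commute with inverse images in `Set` (i.e. the colimit functor
`(I ⥤ Type u) ⥤ Type u` is taut) iff `I` is confluent. -/
theorem colim_isTaut_iff_confluent (I : Type u) [SmallCategory I] :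
    (colim : (I ⥤ Type u) ⥤ Type u).IsTaut ↔ Confluent I :=
  ⟨fun h => confluent_of_isTaut_colim h, fun h => isTaut_colim_of_confluent h⟩
end

section
/- Let I be a small confluent category and Γ : I ⥤ Type u a diagram. For objects I, I' of the category I and elements x ∈ Γ.obj I, x' ∈ Γ.obj I', the images of x and x' under the colimit injections colimit.ι Γ I and colimit.ι Γ I' are equal if and only if there exist an object J and morphisms β : I ⟶ J, β' : I' ⟶ J such that Γ.map β x = Γ.map β' x'. -/
/-!
The relation "identified by a single cospan" on pairs `(i, x)` contains the generating relation
of the colimit, and it is visibly reflexive and symmetric. Confluence makes it transitive: given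
cospans `i ⟶ J₁ ⟵ j` and `j ⟶ J₂ ⟵ k`, complete the span `J₁ ⟵ j ⟶ J₂` to a commutative square.
It is therefore an equivalence relation, and so contains the one generated.
-/

open CategoryTheory CategoryTheory.Limits

universe u

/-- The explicit description, by a single cospan, of the equivalence relation generated by
`Functor.ColimitTypeRel` over a confluent category. -/
theorem exists_cospan_of_eqvGen {I : Type u} [SmallCategory I] (hI : Confluent I)
    (Γ : I ⥤ Type u) {p q : Σ i, Γ.obj i} (h : Relation.EqvGen Γ.ColimitTypeRel p q) :
    ∃ (J : I) (β : p.1 ⟶ J) (β' : q.1 ⟶ J), Γ.map β p.2 = Γ.map β' q.2 := by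
  induction h with
  | rel p q h =>
    obtain ⟨f, hf⟩ := h
    exact ⟨q.1, f, 𝟙 _, by simp [hf]⟩
  | refl p => exact ⟨p.1, 𝟙 _, 𝟙 _, rfl⟩
  | symm p q _ ih =>
    obtain ⟨J, β, β', h⟩ := ih
    exact ⟨J, β', β, h.symm⟩
  | trans p q r _ _ ih₁ ih₂ =>
    obtain ⟨J₁, β₁, β₁', h₁⟩ := ih₁
    obtain ⟨J₂, β₂, β₂', h₂⟩ := ih₂
    obtain ⟨J, γ₁, γ₂, hγ⟩ := hI β₁' β₂
    refine ⟨J, β₁ ≫ γ₁, β₂' ≫ γ₂, ?_⟩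
    calc Γ.map (β₁ ≫ γ₁) p.2 = Γ.map (β₁' ≫ γ₁) q.2 := by simp [h₁]
      _ = Γ.map (β₂ ≫ γ₂) q.2 := by rw [hγ]
      _ = Γ.map (β₂' ≫ γ₂) r.2 := by simp [h₂]

/-- Over a confluent index category, two elements become equal in the colimit of a
`Type`-valued diagram iff they are identified by a single cospan in the diagram. -/
theorem colimit_eq_iff_of_confluent {I : Type u} [SmallCategory I] (hI : Confluent I)
    (Γ : I ⥤ Type u) {i i' : I} (x : Γ.obj i) (x' : Γ.obj i') :
    colimit.ι Γ i x = colimit.ι Γ i' x' ↔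
      ∃ (J : I) (β : i ⟶ J) (β' : i' ⟶ J), Γ.map β x = Γ.map β' x' := by
  constructor
  · intro h
    exact exists_cospan_of_eqvGen hI Γ (Types.colimit_eq h)
  · rintro ⟨J, β, β', h⟩
    exact Types.colimit_sound' β β' h
end

section
/- Let I be a small confluent category, C a category, and Φ : I ⥤ (C ⥤ Type u) a diagram such that Φ.obj i is a taut functor for every object i and Φ.map α is a taut natural transformation for every morphism α of I. Then the colimit functor colimit Φ is taut, and for every object I₀ of I the colimit injection colimit.ι Φ I₀ : Φ.obj I₀ ⟶ colimit Φ is a taut natural transformation. -/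
/-!
Colimits in `C ⥤ Type u` are pointwise, so every element of `(colimit Φ).obj A` comes from some
`(Φ.obj i).obj A`. Two such elements are identified when they are joined by a zigzag of transition
maps; confluence of the index category turns each span of the zigzag into a cospan, so they already
agree in some `(Φ.obj k).obj A` (`colimit_ι_app_eq_iff`). This is the description familiar from
filtered colimits, except that it does not give a common stage for two arbitrary elements.

A taut functor preserves monomorphisms, since a monomorphism is characterized by its kernel pair
being trivial, and the description above passes this on to `colimit Φ`. Uniqueness in each of the
required pullback squares then follows, because one leg is the image of a monomorphism. For
existence, an equality in the colimit is brought to a single stage `k`. There tautness of `Φ.obj k`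
supplies the element needed for tautness of `colimit Φ`, while tautness of the transition map
`Φ.map α : Φ.obj I₀ ⟶ Φ.obj k` supplies the one needed for tautness of `colimit.ι Φ I₀`.
-/

open CategoryTheory CategoryTheory.Limits

universe u v w

/-- In a confluent colimit of sets, two elements are identified exactly when they agree at some
later stage. -/
theorem isColimit_eq_iff_of_confluent {I : Type u} [SmallCategory I] (hI : Confluent I)
    {F : I ⥤ Type u} {c : Cocone F} (hc : IsColimit c) {i j : I} (x : F.obj i) (y : F.obj j) :
    c.ι.app i x = c.ι.app j y ↔
      ∃ (k : I) (α : i ⟶ k) (β : j ⟶ k), F.map α x = F.map β y := by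
  constructor
  · intro h
    have h' : colimit.ι F i x = colimit.ι F j y := by
      have e := fun a => IsColimit.comp_coconePointUniqueUpToIso_hom hc (colimit.isColimit F) a
      have ei := ConcreteCategory.congr_hom (e i) x
      have ej := ConcreteCategory.congr_hom (e j) y
      simp only [ConcreteCategory.comp_apply] at ei ej
      rw [h] at ei
      exact ei.symm.trans ej
    suffices H : ∀ p q : Σ a, F.obj a, Relation.EqvGen F.ColimitTypeRel p q →
        ∃ (k : I) (α : p.1 ⟶ k) (β : q.1 ⟶ k), F.map α p.2 = F.map β q.2 from
      H _ _ (Types.colimit_eq h')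
    intro p q hpq
    induction hpq with
    | rel p q h =>
      obtain ⟨f, hf⟩ := h
      exact ⟨q.1, f, 𝟙 _, by simp [hf]⟩
    | refl p => exact ⟨p.1, 𝟙 _, 𝟙 _, rfl⟩
    | symm p q _ ih =>
      obtain ⟨k, α, β, e⟩ := ih
      exact ⟨k, β, α, e.symm⟩
    | trans p q r _ _ ih₁ ih₂ =>
      obtain ⟨k, α, β, e₁⟩ := ih₁
      obtain ⟨l, γ, δ, e₂⟩ := ih₂
      obtain ⟨m, φ, ψ, w⟩ := hI β γ
      refine ⟨m, α ≫ φ, δ ≫ ψ, ?_⟩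
      simp only [Functor.map_comp, ConcreteCategory.comp_apply, e₁, ← e₂]
      simp only [← ConcreteCategory.comp_apply, ← Functor.map_comp, w]
  · rintro ⟨k, α, β, e⟩
    rw [← c.w α, ← c.w β, ConcreteCategory.comp_apply, ConcreteCategory.comp_apply, e]

/-- A taut functor to sets sends monomorphisms to injections. -/
theorem CategoryTheory.Functor.IsTaut.map_injective {C : Type v} [Category.{w} C]
    {F : C ⥤ Type u} (hF : F.IsTaut) {A B : C} (m : A ⟶ B) [Mono m] {x y : F.obj A}
    (h : F.map m x = F.map m y) : x = y := by
  obtain ⟨z, hx, hy⟩ := Types.exists_of_isPullback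
    (hF (𝟙 A) (𝟙 A) m m (IsKernelPair.id_of_mono m)) x y h
  exact hx.symm.trans hy

section Stages

variable {I : Type u} [SmallCategory I] {C : Type v} [Category.{w} C] (Φ : I ⥤ (C ⥤ Type u))

theorem colimit_obj_exists_rep {A : C} (x : (colimit Φ).obj A) :
    ∃ (i : I) (y : (Φ.obj i).obj A), (colimit.ι Φ i).app A y = x :=
  Types.jointly_surjective_of_isColimit
    (isColimitOfPreserves ((evaluation C (Type u)).obj A) (colimit.isColimit Φ)) x

theorem colimit_ι_app_eq_iff (hI : Confluent I) {A : C} {i j : I}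
    (x : (Φ.obj i).obj A) (y : (Φ.obj j).obj A) :
    (colimit.ι Φ i).app A x = (colimit.ι Φ j).app A y ↔
      ∃ (k : I) (α : i ⟶ k) (β : j ⟶ k), (Φ.map α).app A x = (Φ.map β).app A y :=
  isColimit_eq_iff_of_confluent hI
    (isColimitOfPreserves ((evaluation C (Type u)).obj A) (colimit.isColimit Φ)) x y

theorem colimit_ι_app_map_app {A : C} {i j : I} (α : i ⟶ j) (x : (Φ.obj i).obj A) :
    (colimit.ι Φ j).app A ((Φ.map α).app A x) = (colimit.ι Φ i).app A x := by
  rw [← ConcreteCategory.comp_apply, ← NatTrans.comp_app, colimit.w]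

theorem colimit_map_injective (hI : Confluent I) (hobj : ∀ i : I, (Φ.obj i).IsTaut)
    {A B : C} (m : A ⟶ B) [Mono m] {x y : (colimit Φ).obj A}
    (h : (colimit Φ).map m x = (colimit Φ).map m y) : x = y := by
  obtain ⟨i, x, rfl⟩ := colimit_obj_exists_rep Φ x
  obtain ⟨j, y, rfl⟩ := colimit_obj_exists_rep Φ y
  rw [← NatTrans.naturality_apply, ← NatTrans.naturality_apply,
    colimit_ι_app_eq_iff Φ hI] at h
  obtain ⟨k, α, β, e⟩ := h
  rw [NatTrans.naturality_apply, NatTrans.naturality_apply] at e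
  exact (colimit_ι_app_eq_iff Φ hI x y).2 ⟨k, α, β, Functor.IsTaut.map_injective (hobj k) m e⟩

end Stages

/-- A confluent colimit of taut `Set`-valued functors (along taut transition maps) is
taut, and all the colimit injections are taut. -/
theorem colimit_isTaut_of_confluent {I : Type u} [SmallCategory I] (hI : Confluent I)
    {C : Type v} [Category.{w} C] (Φ : I ⥤ (C ⥤ Type u))
    (hobj : ∀ i : I, (Φ.obj i).IsTaut)
    (hmap : ∀ {i j : I} (α : i ⟶ j), NatTrans.IsTaut (Φ.map α)) :
    (colimit Φ).IsTaut ∧ ∀ I₀ : I, NatTrans.IsTaut (colimit.ι Φ I₀) := by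
  constructor
  · intro P X Y Z fst snd f g _ hP
    -- `fst` is a base change of `g`, so `(colimit Φ).map fst` is injective.
    have : Mono fst := by
      constructor
      intro W a b hab
      refine hP.hom_ext hab ?_
      rw [← cancel_mono g, Category.assoc, Category.assoc, ← hP.w, reassoc_of% hab]
    rw [Types.isPullback_iff]
    refine ⟨by rw [← Functor.map_comp, ← Functor.map_comp, hP.w],
      fun p q h => colimit_map_injective Φ hI hobj fst h.1, fun x y h => ?_⟩
    obtain ⟨i, x, rfl⟩ := colimit_obj_exists_rep Φ x
    obtain ⟨j, y, rfl⟩ := colimit_obj_exists_rep Φ y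
    rw [← NatTrans.naturality_apply, ← NatTrans.naturality_apply,
      colimit_ι_app_eq_iff Φ hI] at h
    obtain ⟨k, α, β, e⟩ := h
    rw [NatTrans.naturality_apply, NatTrans.naturality_apply] at e
    obtain ⟨p, hp₁, hp₂⟩ := Types.exists_of_isPullback (hobj k fst snd f g hP) _ _ e
    refine ⟨(colimit.ι Φ k).app P p, ?_, ?_⟩
    · rw [← NatTrans.naturality_apply, hp₁, colimit_ι_app_map_app]
    · rw [← NatTrans.naturality_apply, hp₂, colimit_ι_app_map_app]
  · intro I₀ A B m _
    rw [Types.isPullback_iff]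
    refine ⟨(colimit.ι Φ I₀).naturality m,
      fun p q h => Functor.IsTaut.map_injective (hobj I₀) m h.1, fun b a h => ?_⟩
    obtain ⟨j, a, rfl⟩ := colimit_obj_exists_rep Φ a
    rw [← NatTrans.naturality_apply, colimit_ι_app_eq_iff Φ hI] at h
    obtain ⟨k, α, β, e⟩ := h
    rw [NatTrans.naturality_apply] at e
    obtain ⟨a₀, h₁, h₂⟩ := Types.exists_of_isPullback (hmap α m) b ((Φ.map β).app A a) e
    refine ⟨a₀, h₁, ?_⟩
    rw [← colimit_ι_app_map_app Φ α, h₂, colimit_ι_app_map_app]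
end

section
/- Let C be a category, I a type, and F : I → (C ⥤ Type u) a family of functors. The coproduct functor ∐ i, F i (computed pointwise) is taut if and only if F i is taut for every i ∈ I. -/
/-!
A commutative square of sets is a pullback exactly when each pair of elements of the two legs with
equal images in the base has a unique preimage in the corner. In a pointwise disjoint union
`∐ F`, every element lies in a unique summand, and the maps `(∐ F).map f` respect the
decomposition into summands. Hence a compatible pair of elements lies in a single summand, and
so do its preimages, so the image of a square under `∐ F` is a pullback if and only if its image
under each `F i` is (`isPullback_map_sigma_iff`). Tautness of `∐ F` is then, square by square,
tautness of every `F i`.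
-/

open CategoryTheory CategoryTheory.Limits

universe u v w

section

variable {C : Type v} [Category.{w} C] {I : Type u} (F : I → (C ⥤ Type u))

lemma sigma_ι_naturality_apply (i : I) {X Y : C} (f : X ⟶ Y) (x : (F i).obj X) :
    (∐ F).map f ((Sigma.ι F i).app X x) = (Sigma.ι F i).app Y ((F i).map f x) :=
  (NatTrans.naturality_apply (Sigma.ι F i) f x).symm

/-- Coproducts of `Type`-valued functors are computed pointwise: the coproduct cofan of `F`,
evaluated at `X`, is a coproduct cofan. -/
noncomputable def isColimitSigmaEval (X : C) :
    IsColimit (Cofan.mk ((∐ F).obj X) (fun i ↦ (Sigma.ι F i).app X)) :=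
  isColimitCofanMkObjOfIsColimit ((evaluation C (Type u)).obj X) _ _
    (coproductIsCoproduct F)

lemma sigma_obj_exists (X : C) (x : (∐ F).obj X) :
    ∃ (i : I) (y : (F i).obj X), (Sigma.ι F i).app X y = x :=
  Cofan.inj_jointly_surjective_of_isColimit (isColimitSigmaEval F X) x

lemma sigma_ι_app_injective (X : C) (i : I) :
    Function.Injective ((Sigma.ι F i).app X) :=
  Cofan.inj_injective_of_isColimit (isColimitSigmaEval F X) i

/-- Distinct summands are disjoint in `(∐ F).obj X`. -/
lemma sigma_index_eq {X : C} {i j : I} {x : (F i).obj X} {y : (F j).obj X}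
    (h : (Sigma.ι F i).app X x = (Sigma.ι F j).app X y) : i = j :=
  Cofan.eq_of_inj_apply_eq_of_isColimit (isColimitSigmaEval F X) x y h

/-- The image under `∐ F` of a commutative square is a pullback iff its image under each `F i`
is. -/
lemma isPullback_map_sigma_iff {P X Y Z : C} {fst : P ⟶ X} {snd : P ⟶ Y} {f : X ⟶ Z} {g : Y ⟶ Z}
    (w : fst ≫ f = snd ≫ g) :
    IsPullback ((∐ F).map fst) ((∐ F).map snd) ((∐ F).map f) ((∐ F).map g) ↔
      ∀ i, IsPullback ((F i).map fst) ((F i).map snd) ((F i).map f) ((F i).map g) := by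
  have hw (G : C ⥤ Type u) : G.map fst ≫ G.map f = G.map snd ≫ G.map g := by
    rw [← G.map_comp, w, G.map_comp]
  simp only [Types.isPullback_iff, hw, true_and]
  constructor
  · rintro ⟨hinj, hex⟩ i
    refine ⟨fun p q ⟨h₁, h₂⟩ ↦ sigma_ι_app_injective F P i (hinj _ _ ⟨?_, ?_⟩), fun x y h ↦ ?_⟩
    · simp only [sigma_ι_naturality_apply, h₁]
    · simp only [sigma_ι_naturality_apply, h₂]
    · obtain ⟨p, hp₁, hp₂⟩ := hex ((Sigma.ι F i).app X x) ((Sigma.ι F i).app Y y)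
        (by simp only [sigma_ι_naturality_apply, h])
      obtain ⟨j, p, rfl⟩ := sigma_obj_exists F P p
      rw [sigma_ι_naturality_apply] at hp₁ hp₂
      obtain rfl := sigma_index_eq F hp₁
      exact ⟨p, sigma_ι_app_injective F X j hp₁, sigma_ι_app_injective F Y j hp₂⟩
  · intro H
    refine ⟨fun p q ⟨h₁, h₂⟩ ↦ ?_, fun x y h ↦ ?_⟩
    · obtain ⟨i, p, rfl⟩ := sigma_obj_exists F P p
      obtain ⟨j, q, rfl⟩ := sigma_obj_exists F P q
      simp only [sigma_ι_naturality_apply] at h₁ h₂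
      obtain rfl := sigma_index_eq F h₁
      rw [(H i).1 p q ⟨sigma_ι_app_injective F X i h₁, sigma_ι_app_injective F Y i h₂⟩]
    · obtain ⟨i, x, rfl⟩ := sigma_obj_exists F X x
      obtain ⟨j, y, rfl⟩ := sigma_obj_exists F Y y
      simp only [sigma_ι_naturality_apply] at h
      obtain rfl := sigma_index_eq F h
      obtain ⟨p, rfl, rfl⟩ := (H i).2 x y (sigma_ι_app_injective F Z i h)
      exact ⟨(Sigma.ι F i).app P p, sigma_ι_naturality_apply F i fst p,
        sigma_ι_naturality_apply F i snd p⟩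

end

/-- A coproduct of `Set`-valued functors is taut iff every summand is taut. -/
theorem coproduct_isTaut_iff {C : Type v} [Category.{w} C] {I : Type u}
    (F : I → (C ⥤ Type u)) :
    (∐ F).IsTaut ↔ ∀ i : I, (F i).IsTaut := by
  constructor
  · intro H i P X Y Z fst snd f g _ h
    exact (isPullback_map_sigma_iff F h.w).1 (H fst snd f g h) i
  · intro H P X Y Z fst snd f g _ h
    exact (isPullback_map_sigma_iff F h.w).2 fun i ↦ H i fst snd f g h
end

section
/- Let X be a type. For F : Filter X, the collection of sets S ⊆ X ⊕ PUnit such that Sum.inr PUnit.unit ∈ S and Sum.inl ⁻¹' S ∈ F is a filter e(F) on X ⊕ PUnit. The map e : Filter X → Filter (X ⊕ PUnit) is injective and its range is exactly the set of filters G on X ⊕ PUnit with G ∉ Set.range (Filter.map (Sum.inl : X → X ⊕ PUnit) : Filter X → Filter (X ⊕ PUnit)). (Thus the difference of the filter functor 𝔽 is isomorphic to 𝔽 itself: Δ[𝔽] ≅ 𝔽.) -/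
universe u

/-!
Take `e F = map inl F ⊔ pure *`. A filter `G` on `X ⊕ 1` is in the image of `map inl` exactly when
`range inl ∈ G`, that is, when some member of `G` omits `*`. So outside this image every member of
`G` contains `*`, and then `G` is recovered from its trace on `X`: `G = e (comap inl G)`. The filter
`F` is recovered from `e F` by testing the sets `inl '' A ∪ {*}`.
-/

/-- The difference of the filter functor is the filter functor itself:
for each filter `F` on `X`, the sets containing `*` whose `inl`-preimage lies in `F`
form a filter `e F` on `X ⊕ 1`; the map `e` is injective and its range is exactly the
complement of the image of `Filter.map inl`, so `Δ[𝔽] ≅ 𝔽`. -/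
theorem delta_filter_functor (X : Type u) :
    ∃ e : Filter X → Filter (X ⊕ PUnit.{u+1}),
      (∀ (F : Filter X) (S : Set (X ⊕ PUnit.{u+1})),
        S ∈ e F ↔ (Sum.inr PUnit.unit ∈ S ∧ Sum.inl ⁻¹' S ∈ F)) ∧
      Function.Injective e ∧
      Set.range e = {G : Filter (X ⊕ PUnit.{u+1}) |
        G ∉ Set.range (Filter.map (Sum.inl : X → X ⊕ PUnit.{u+1}) :
          Filter X → Filter (X ⊕ PUnit.{u+1}))} := by
  refine ⟨fun F => Filter.map Sum.inl F ⊔ pure (Sum.inr PUnit.unit), ?_, ?_, ?_⟩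
  · intro F S
    simp [Filter.mem_sup, and_comm]
  · intro F F' h
    ext A
    have key := Filter.ext_iff.mp h (Sum.inl '' A ∪ {Sum.inr PUnit.unit})
    have hpre : (Sum.inl : X → X ⊕ PUnit.{u+1}) ⁻¹'
        (Sum.inl '' A ∪ {Sum.inr PUnit.unit}) = A := by
      ext x; simp
    simpa [Filter.mem_sup, Filter.mem_map, -Set.union_singleton, hpre] using key
  · ext G
    constructor
    · rintro ⟨F, rfl⟩ ⟨H, hH⟩
      -- `range inl` belongs to every `map inl H`, but it omits `*`.
      have h1 : Set.range (Sum.inl : X → X ⊕ PUnit.{u+1}) ∈ Filter.map Sum.inl H :=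
        Filter.range_mem_map
      rw [hH] at h1
      have h2 := (Filter.mem_sup.mp h1).2
      simp at h2
    · intro hG
      have hstar : ∀ S ∈ G, Sum.inr PUnit.unit ∈ S := by
        intro S hS
        by_contra hn
        refine hG ⟨Filter.comap Sum.inl G, Filter.map_comap_of_mem (Filter.mem_of_superset hS ?_)⟩
        rintro (x | ⟨⟩) hx
        · exact ⟨x, rfl⟩
        · exact absurd hx hn
      refine ⟨Filter.comap Sum.inl G, ?_⟩
      ext S
      constructor
      · intro hS
        obtain ⟨h1, h2⟩ := Filter.mem_sup.mp hS
        obtain ⟨T, hT, hTS⟩ := h1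
        refine Filter.mem_of_superset hT ?_
        rintro (x | ⟨⟩) hx
        · exact hTS hx
        · exact h2
      · intro hS
        exact Filter.mem_sup.mpr ⟨Filter.preimage_mem_comap hS, hstar S hS⟩
end

section
/- Let A be a type, 𝒰 an ultrafilter on A, and X a type. There exists exactly one germ in the germ space Filter.Germ (↑𝒰) (X ⊕ PUnit) that is not in the range of the map Filter.Germ.map (Sum.inl : X → X ⊕ PUnit) : Filter.Germ (↑𝒰) X → Filter.Germ (↑𝒰) (X ⊕ PUnit), namely the germ of the constant function with value Sum.inr PUnit.unit. (Thus the difference of the reduced power functor X ↦ X^𝒰 is the constant functor 1.) -/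
/-!
For `f : A → X ⊕ 1`, exactly one of the sets `{a | f a ∈ X}` and `{a | f a = *}` belongs to the
ultrafilter `𝒰`. In the first case the germ of `f` comes from a germ in `X`, obtained by
redefining `f` arbitrarily off that set; in the second case `f` is `𝒰`-almost everywhere the
constant `*`. Properness of `𝒰` makes the two cases exclusive.
-/

universe u

/-- The difference of the reduced power functor `X ↦ X^𝒰` along an ultrafilter `𝒰` is
the constant functor `1`: there is exactly one germ in `(X ⊕ 1)^𝒰` outside the image of
`X^𝒰`, namely the germ of the constant function with value `*`. -/
theorem delta_ultrafilter_reduced_power (A : Type u) (𝒰 : Ultrafilter A) (X : Type u) :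
    ∀ g : Filter.Germ (𝒰 : Filter A) (X ⊕ PUnit.{u+1}),
      (g ∉ Set.range (Filter.Germ.map (Sum.inl : X → X ⊕ PUnit.{u+1}) :
          Filter.Germ (𝒰 : Filter A) X → Filter.Germ (𝒰 : Filter A) (X ⊕ PUnit.{u+1}))) ↔
        g = ((fun _ : A => (Sum.inr PUnit.unit : X ⊕ PUnit.{u+1})) :
          Filter.Germ (𝒰 : Filter A) (X ⊕ PUnit.{u+1})) := by
  intro g
  induction g using Filter.Germ.inductionOn with
  | h f =>
  rw [Filter.Germ.coe_eq]
  constructor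
  · intro hg
    rcases 𝒰.em (fun a => ∃ x, f a = Sum.inl x) with h | h
    · refine absurd ?_ hg
      -- `X` may be empty, so a default value is taken from a point of the `𝒰`-large set.
      obtain ⟨_, x₀, _⟩ := h.exists
      refine ⟨((fun a => Sum.elim id (fun _ => x₀) (f a) : A → X) : Filter.Germ (𝒰 : Filter A) X), ?_⟩
      rw [Filter.Germ.map_coe, Filter.Germ.coe_eq]
      filter_upwards [h] with a ⟨x, hx⟩
      simp [hx]
    · filter_upwards [h] with a ha
      rcases hfa : f a with x | ⟨⟩
      · exact absurd ⟨x, hfa⟩ ha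
      · rfl
  · rintro hf ⟨k, hk⟩
    induction k using Filter.Germ.inductionOn with
    | h k =>
    rw [Filter.Germ.map_coe, Filter.Germ.coe_eq] at hk
    obtain ⟨a, ha⟩ := (hk.trans hf).exists
    exact Sum.inl_ne_inr ha
end
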